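/- arXiv:2002.00242 — 3 statements merged into one kernel-verified Lean document; each statement's English description precedes it below -/
import Mathlib

section
/- Let (R,𝔪) be a Noetherian local ring of Krull dimension d > 0 and let x ∈ 𝔪 be a parameter, i.e., the Krull dimension of R/(x) equals d − 1. If R/(x) is an integral domain, then x is a non-zerodivisor on R and R is an integral domain. -/
/-- A chain of primes all of whose members contain `I` has length at most `dim R/I`. -/
theorem ltSeries_length_le_ringKrullDim_quotient {R : Type*} [CommRing R] (I : Ideal R)
    (s : LTSeries (PrimeSpectrum R)) (hs : I ≤ s.head.asIdeal) :
    (s.length : WithBot ℕ∞) ≤ ringKrullDim (R ⧸ I) := by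
  rw [ringKrullDim_quotient]
  let t : LTSeries (PrimeSpectrum.zeroLocus (R := R) I) :=
    { length := s.length
      toFun := fun i ↦ ⟨s i, hs.trans (s.head_le i)⟩
      step := fun i ↦ s.step i }
  exact Order.LTSeries.length_le_krullDim t

/-- A prime ideal generated by a parameter of a Noetherian local ring of positive dimension
is not a minimal prime. -/
theorem exists_isPrime_lt_span_singleton_of_parameter {R : Type*} [CommRing R]
    [IsNoetherianRing R] [IsLocalRing R] {x : R} (hx : x ∈ IsLocalRing.maximalIdeal R)
    (hdim : 0 < ringKrullDim R)
    (hparam : ringKrullDim (R ⧸ Ideal.span {x}) + 1 = ringKrullDim R)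
    (hprime : (Ideal.span {x}).IsPrime) :
    ∃ q : Ideal R, q.IsPrime ∧ q < Ideal.span {x} := by
  obtain ⟨p, hlast, hlen⟩ := (IsLocalRing.maximalIdeal R).exists_ltSeries_length_eq_height
  obtain ⟨q, hxq, hpq, -, -⟩ :=
    PrimeSpectrum.exist_ltSeries_mem_one_of_mem_last p (x := x) (by rw [hlast]; exact hx)
  have hd : ringKrullDim R = (q.length : WithBot ℕ∞) := by
    rw [← IsLocalRing.maximalIdeal_height_eq_ringKrullDim, ← hlen, hpq]
    rfl
  have hq0 : q.length ≠ 0 := fun h ↦ by simp [hd, h] at hdim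
  have hP : Ideal.span {x} ≤ (q 1).asIdeal := (Ideal.span_singleton_le_iff_mem _).mpr hxq
  let P : PrimeSpectrum R := ⟨Ideal.span {x}, hprime⟩
  have hhead : (q.tail hq0).head = q 1 := RelSeries.head_tail q hq0
  have hPq : P = q 1 := by
    by_contra hne
    have hlt : P < (q.tail hq0).head := by
      rw [hhead]
      exact lt_of_le_of_ne hP hne
    have hle := ltSeries_length_le_ringKrullDim_quotient (Ideal.span {x})
      ((q.tail hq0).cons P hlt) (by simp [P])
    have hlength : ((q.tail hq0).cons P hlt).length = q.length := by
      simp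
      omega
    rw [hlength] at hle
    have hle' := add_le_add_left hle 1
    rw [hparam, hd] at hle'
    have : q.length + 1 ≤ q.length := by exact_mod_cast hle'
    omega
  refine ⟨(q 0).asIdeal, (q 0).isPrime, ?_⟩
  have h01 : q 0 < q 1 := by
    refine q.strictMono ?_
    rw [Fin.lt_def, Fin.val_zero, Fin.val_one', Nat.mod_eq_of_lt (by omega)]
    exact one_pos
  rw [← hPq] at h01
  exact h01

/-- In a Noetherian local ring, a prime ideal strictly contained in a proper principal ideal
is zero. -/
theorem eq_bot_of_isPrime_lt_span_singleton {R : Type*} [CommRing R] [IsNoetherianRing R]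
    [IsLocalRing R] {x : R} (hx : x ∈ IsLocalRing.maximalIdeal R) {q : Ideal R} [hq : q.IsPrime]
    (hlt : q < Ideal.span {x}) : q = ⊥ := by
  have hxq : x ∉ q := fun h ↦
    hlt.not_ge ((Ideal.span_singleton_le_iff_mem q).mpr h)
  refine Submodule.eq_bot_of_le_smul_of_le_jacobson_bot (Ideal.span {x}) q
    (IsNoetherian.noetherian q) (fun y hy ↦ ?_) ?_
  · obtain ⟨r, rfl⟩ := Ideal.mem_span_singleton'.mp (hlt.le hy)
    rw [mul_comm]
    exact Submodule.smul_mem_smul (Ideal.mem_span_singleton_self x)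
      ((hq.mem_or_mem hy).resolve_right hxq)
  · rw [IsLocalRing.jacobson_eq_maximalIdeal ⊥ bot_ne_top]
    exact (Ideal.span_singleton_le_iff_mem _).mpr hx

/-- Let `(R,𝔪)` be a Noetherian local ring of Krull dimension `d > 0` and
`x ∈ 𝔪` a parameter (i.e. `dim R/(x) = d - 1`, encoded as `dim R/(x) + 1 = dim R`).
If `R/(x)` is an integral domain, then `x` is a non-zerodivisor on `R` and `R` is a domain. -/
theorem deformation_of_domain_along_parameter
    (R : Type*) [CommRing R] [IsNoetherianRing R] [IsLocalRing R]
    (x : R) (hx : x ∈ IsLocalRing.maximalIdeal R)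
    (hdim : 0 < ringKrullDim R)
    (hparam : ringKrullDim (R ⧸ Ideal.span {x}) + 1 = ringKrullDim R)
    (hdom : IsDomain (R ⧸ Ideal.span {x})) :
    x ∈ nonZeroDivisors R ∧ IsDomain R := by
  obtain ⟨q, hq, hlt⟩ := exists_isPrime_lt_span_singleton_of_parameter hx hdim hparam
    ((Ideal.Quotient.isDomain_iff_prime _).mp hdom)
  obtain rfl := eq_bot_of_isPrime_lt_span_singleton hx hlt
  have hR : IsDomain R := IsDomain.of_bot_isPrime R
  refine ⟨mem_nonZeroDivisors_of_ne_zero fun h ↦ ?_, hR⟩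
  simp [h] at hlt
end

section
/- Let (S,𝔫) be a regular local (Noetherian) ring of prime characteristic p > 0, let I be an ideal of S, and let x ∈ S be an element whose image in S/I is a non-zerodivisor. Then the image of x in S/I^[p] is a non-zerodivisor, where I^[p] is the Frobenius power of I. -/
open IsLocalRing

/-- The Frobenius power `I^[p]` of an ideal: the ideal generated by the `p`-th powers of
all elements of `I`. -/
def frobeniusPower (p : ℕ) {R : Type*} [CommRing R] (I : Ideal R) : Ideal R :=
  Ideal.span ((fun r => r ^ p) '' (I : Set R))

/-- `(S,𝔫)` is a regular local ring: a Noetherian local ring whose maximal ideal is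
generated by `dim S` elements. -/
def IsRegularLocal (S : Type*) [CommRing S] [IsLocalRing S] : Prop :=
  ∃ (n : ℕ) (f : Fin n → S), Ideal.span (Set.range f) = maximalIdeal S ∧
    (n : WithBot (WithTop ℕ)) = ringKrullDim S

section Dimension

variable {S : Type*} [CommRing S]

lemma not_natCast_succ_le_natCast (n : ℕ) : ¬ ((n + 1 : ℕ) : WithBot ℕ∞) ≤ n := by
  rw [Nat.cast_le]; omega

lemma exists_isPrime_le_ringKrullDim_quotient {K : Ideal S} {n : ℕ}
    (h : (n : WithBot ℕ∞) ≤ ringKrullDim (S ⧸ K)) :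
    ∃ P : Ideal S, P.IsPrime ∧ K ≤ P ∧ (n : WithBot ℕ∞) ≤ ringKrullDim (S ⧸ P) := by
  rw [ringKrullDim_quotient, Order.le_krullDim_iff] at h
  obtain ⟨l, hl⟩ := h
  refine ⟨l.head.1.asIdeal, l.head.1.isPrime, l.head.2, ?_⟩
  rw [ringKrullDim_quotient, Order.le_krullDim_iff]
  refine ⟨⟨l.length, fun i => ⟨(l i).1, ?_⟩, fun i => l.step i⟩, hl⟩
  exact l.head_le i

lemma ringKrullDim_quotient_succ_le_of_isPrime_of_lt {P Q : Ideal S} (hP : P.IsPrime)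
    (h : P < Q) : ringKrullDim (S ⧸ Q) + 1 ≤ ringKrullDim (S ⧸ P) := by
  obtain ⟨r, hrQ, hrP⟩ := SetLike.exists_of_lt h
  refine ringKrullDim_succ_le_of_surjective (Ideal.Quotient.factor h.le)
    (Ideal.Quotient.factor_surjective h.le) (r := Ideal.Quotient.mk P r) ?_ ?_
  · exact mem_nonZeroDivisors_of_ne_zero (by rwa [Ne, Ideal.Quotient.eq_zero_iff_mem])
  · rwa [Ideal.Quotient.factor_mk, Ideal.Quotient.eq_zero_iff_mem]

variable [IsNoetherianRing S] [IsLocalRing S]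

lemma ringKrullDim_quotient_le_quotient_sup_span_add_one {K : Ideal S} {g : S}
    (hK : K ≤ maximalIdeal S) (hg : g ∈ maximalIdeal S) :
    ringKrullDim (S ⧸ K) ≤ ringKrullDim (S ⧸ (K ⊔ Ideal.span {g})) + 1 := by
  have : Nontrivial (S ⧸ K) := Ideal.Quotient.nontrivial_iff.mpr
    (fun h => Ideal.IsPrime.ne_top' (top_le_iff.mp (h ▸ hK)))
  have : IsLocalRing (S ⧸ K) :=
    IsLocalRing.of_surjective' (Ideal.Quotient.mk K) Ideal.Quotient.mk_surjective
  have h := ringKrullDim_le_ringKrullDim_quotient_add_card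
    ({Ideal.Quotient.mk K g} : Finset (S ⧸ K)) (by
      intro y hy
      rw [Finset.coe_singleton, Set.mem_singleton_iff] at hy
      subst hy
      rw [SetLike.mem_coe, IsLocalRing.ringJacobson_eq_maximalIdeal, mem_maximalIdeal, mem_nonunits_iff]
      intro hu
      obtain ⟨b, hb⟩ := hu.exists_right_inv
      obtain ⟨b, rfl⟩ := Ideal.Quotient.mk_surjective b
      rw [← map_mul, ← map_one (Ideal.Quotient.mk K), Ideal.Quotient.eq] at hb
      refine (Ideal.ne_top_iff_one _).mp (Ideal.IsPrime.ne_top' (I := maximalIdeal S)) ?_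
      simpa using sub_mem (Ideal.mul_mem_right b _ hg) (hK hb))
  have e : ((S ⧸ K) ⧸ Ideal.span {Ideal.Quotient.mk K g}) ≃+* S ⧸ (K ⊔ Ideal.span {g}) :=
    (Ideal.quotEquivOfEq (by rw [Ideal.map_span, Set.image_singleton])).trans
      (DoubleQuot.quotQuotEquivQuotSup K (Ideal.span {g}))
  rw [Finset.coe_singleton, Finset.card_singleton, ringKrullDim_eq_of_ringEquiv e] at h
  exact_mod_cast h

lemma ringKrullDim_quotient_le_length (rs : List S) : ∀ {K : Ideal S},
    K ⊔ Ideal.ofList rs = maximalIdeal S → ringKrullDim (S ⧸ K) ≤ rs.length := by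
  induction rs with
  | nil =>
    intro K hK
    rw [Ideal.ofList_nil, sup_bot_eq] at hK
    subst hK
    let := Ideal.Quotient.field (maximalIdeal S)
    simp [ringKrullDim_eq_zero_of_field]
  | cons r rs ih =>
    intro K hK
    rw [Ideal.ofList_cons, ← sup_assoc] at hK
    have hK' : K ⊔ Ideal.span {r} ≤ maximalIdeal S := hK ▸ le_sup_left
    refine (ringKrullDim_quotient_le_quotient_sup_span_add_one (le_sup_left.trans hK')
      (hK' (Ideal.mem_sup_right (Ideal.mem_span_singleton_self r)))).trans ?_
    rw [List.length_cons, Nat.cast_succ]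
    gcongr
    exact ih hK

lemma natCast_length_le_ringKrullDim_quotient_sup_span {r : S} {rs : List S} {K : Ideal S}
    (hK : K ⊔ Ideal.ofList (r :: rs) = maximalIdeal S)
    (h : ((r :: rs).length : WithBot ℕ∞) ≤ ringKrullDim (S ⧸ K)) :
    (rs.length : WithBot ℕ∞) ≤ ringKrullDim (S ⧸ (K ⊔ Ideal.span {r})) := by
  rw [Ideal.ofList_cons, ← sup_assoc] at hK
  have hK' : K ⊔ Ideal.span {r} ≤ maximalIdeal S := hK ▸ le_sup_left
  rw [← ENat.WithBot.add_le_add_one_right_iff, ← Nat.cast_succ]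
  exact h.trans (ringKrullDim_quotient_le_quotient_sup_span_add_one (le_sup_left.trans hK')
      (hK' (Ideal.mem_sup_right (Ideal.mem_span_singleton_self r))))

lemma notMem_of_natCast_length_le_ringKrullDim_quotient {r : S} {rs : List S} {K : Ideal S}
    (hK : K ⊔ Ideal.ofList (r :: rs) = maximalIdeal S)
    (h : ((r :: rs).length : WithBot ℕ∞) ≤ ringKrullDim (S ⧸ K)) : r ∉ K := by
  intro hr
  rw [Ideal.ofList_cons, ← sup_assoc,
    sup_eq_left.mpr ((Ideal.span_singleton_le_iff_mem K).mpr hr)] at hK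
  exact not_natCast_succ_le_natCast _ (h.trans (ringKrullDim_quotient_le_length rs hK))

/-- If the maximal ideal is generated modulo `K` by at most `dim (S ⧸ K)` elements, that is, if
`S ⧸ K` is a regular local ring, then `K` is prime. -/
lemma isPrime_of_natCast_length_le_ringKrullDim_quotient (rs : List S) : ∀ {K : Ideal S},
    K ⊔ Ideal.ofList rs = maximalIdeal S →
    (rs.length : WithBot ℕ∞) ≤ ringKrullDim (S ⧸ K) → K.IsPrime := by
  induction rs with
  | nil =>
    intro K hK _
    rw [Ideal.ofList_nil, sup_bot_eq] at hK
    subst hK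
    infer_instance
  | cons r rs ih =>
    intro K hK hdim
    obtain ⟨P, hP, hKP, hPdim⟩ := exists_isPrime_le_ringKrullDim_quotient hdim
    have hm : maximalIdeal S = K ⊔ Ideal.span {r} ⊔ Ideal.ofList rs := by
      rw [← hK, Ideal.ofList_cons, sup_assoc]
    have hr : r ∈ maximalIdeal S := by
      rw [hm]
      exact Ideal.mem_sup_left (Ideal.mem_sup_right (Ideal.mem_span_singleton_self r))
    have hPm : P ⊔ Ideal.ofList (r :: rs) = maximalIdeal S := by
      refine le_antisymm (sup_le (le_maximalIdeal hP.ne_top) (hK ▸ le_sup_right)) ?_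
      rw [← hK]
      exact sup_le_sup_right hKP _
    have hrP := notMem_of_natCast_length_le_ringKrullDim_quotient hPm hPdim
    have hKr := ih (hm.symm) (natCast_length_le_ringKrullDim_quotient_sup_span hK hdim)
    have heq : K ⊔ Ideal.span {r} = P ⊔ Ideal.span {r} := by
      by_contra hne
      have h1 := ringKrullDim_quotient_succ_le_of_isPrime_of_lt hKr
        ((sup_le_sup_right hKP _).lt_of_ne hne)
      have h2 := natCast_length_le_ringKrullDim_quotient_sup_span hPm hPdim
      refine not_natCast_succ_le_natCast rs.length ?_
      rw [Nat.cast_succ]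
      refine (add_le_add_left h2 1).trans (h1.trans (ringKrullDim_quotient_le_length rs hm.symm))
    have hPK : P ≤ K := by
      refine Submodule.le_of_le_smul_of_le_jacobson_bot (I := maximalIdeal S)
        (IsNoetherian.noetherian _) (maximalIdeal_le_jacobson _) ?_
      intro q hq
      have hq' : q ∈ K ⊔ Ideal.span {r} := heq ▸ Ideal.mem_sup_left hq
      obtain ⟨k, hk, t, ht, rfl⟩ := Submodule.mem_sup.mp hq'
      obtain ⟨b, rfl⟩ := Ideal.mem_span_singleton'.mp ht
      have hb : b ∈ P := (hP.mem_or_mem ((add_mem_cancel_left (hKP hk)).mp hq)).resolve_right hrP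
      refine add_mem (Ideal.mem_sup_left hk) (Ideal.mem_sup_right ?_)
      rw [mul_comm]
      exact Submodule.smul_mem_smul hr hb
    exact le_antisymm hKP hPK ▸ hP

end Dimension

section Length

variable {S : Type*} [CommRing S]

lemma length_quotient_anti {A B : Ideal S} (h : A ≤ B) :
    Module.length S (S ⧸ B) ≤ Module.length S (S ⧸ A) :=
  Module.length_le_of_surjective (Submodule.factor h) (Submodule.factor_surjective h)

lemma length_quotient_eq_colon_add_sup (K : Ideal S) (y : S) :
    Module.length S (S ⧸ K) =
      Module.length S (S ⧸ K.colon {y}) + Module.length S (S ⧸ (K ⊔ Ideal.span {y})) := by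
  have hle : K.colon {y} ≤ Submodule.comap (LinearMap.mulRight S y) K := fun a ha => by
    simpa using Submodule.mem_colon_singleton.mp ha
  refine Module.length_eq_add_of_exact (Submodule.mapQ (K.colon {y}) K (LinearMap.mulRight S y) hle)
    (Submodule.factor le_sup_left) ?_ (Submodule.factor_surjective le_sup_left) ?_
  · rw [injective_iff_map_eq_zero]
    intro a ha
    obtain ⟨a, rfl⟩ := Submodule.Quotient.mk_surjective _ a
    rw [Submodule.mapQ_apply, Submodule.Quotient.mk_eq_zero] at ha
    rw [Submodule.Quotient.mk_eq_zero, Submodule.mem_colon_singleton]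
    simpa using ha
  · intro b
    obtain ⟨b, rfl⟩ := Submodule.Quotient.mk_surjective _ b
    change Submodule.Quotient.mk b = 0 ↔ _
    rw [Submodule.Quotient.mk_eq_zero]
    constructor
    · intro hb
      obtain ⟨k, hk, t, ht, rfl⟩ := Submodule.mem_sup.mp hb
      obtain ⟨c, rfl⟩ := Ideal.mem_span_singleton'.mp ht
      refine ⟨Submodule.Quotient.mk c, ?_⟩
      rw [Submodule.mapQ_apply, Submodule.Quotient.eq]
      simpa using hk
    · rintro ⟨c, hc⟩
      obtain ⟨c, rfl⟩ := Submodule.Quotient.mk_surjective _ c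
      rw [Submodule.mapQ_apply, Submodule.Quotient.eq] at hc
      rw [← sub_sub_cancel (c * y) b]
      exact sub_mem (Ideal.mem_sup_right (Ideal.mem_span_singleton'.mpr ⟨c, rfl⟩))
        (Ideal.mem_sup_left hc)

lemma length_quotient_eq_zero_iff {K : Ideal S} : Module.length S (S ⧸ K) = 0 ↔ K = ⊤ := by
  rw [Module.length_eq_zero_iff, Ideal.Quotient.subsingleton_iff]

lemma length_quotient_sup_span_lt {K : Ideal S} {y : S} (hK : Module.length S (S ⧸ K) ≠ ⊤)
    (hy : y ∉ K) : Module.length S (S ⧸ (K ⊔ Ideal.span {y})) < Module.length S (S ⧸ K) := by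
  refine lt_of_le_of_ne (length_quotient_anti le_sup_left) fun heq => hy ?_
  have h := length_quotient_eq_colon_add_sup K y
  rw [← heq] at h hK
  have h0 : Module.length S (S ⧸ K.colon {y}) = 0 :=
    (ENat.add_left_injective_of_ne_top hK (by simpa using h)).symm
  rw [length_quotient_eq_zero_iff, Ideal.eq_top_iff_one, Submodule.mem_colon_singleton] at h0
  simpa using h0

lemma eq_of_le_of_length_quotient_le {A B : Ideal S} (h : A ≤ B)
    (hA : Module.length S (S ⧸ A) ≠ ⊤)
    (hAB : Module.length S (S ⧸ A) ≤ Module.length S (S ⧸ B)) : A = B := by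
  refine le_antisymm h fun y hy => ?_
  by_contra hyA
  refine (length_quotient_sup_span_lt hA hyA).not_ge (hAB.trans (length_quotient_anti ?_))
  exact sup_le h ((Ideal.span_singleton_le_iff_mem _).mpr hy)

/-- `rs` is a weakly regular sequence on `S ⧸ K`. -/
def IsRegularMod : Ideal S → List S → Prop
  | _, [] => True
  | K, r :: rs => K.colon {r} ≤ K ∧ IsRegularMod (K ⊔ Ideal.span {r}) rs

lemma isRegularMod_top (rs : List S) : IsRegularMod (⊤ : Ideal S) rs := by
  induction rs with
  | nil => trivial
  | cons r rs ih => exact ⟨le_top, by rwa [top_sup_eq]⟩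

lemma IsRegularMod.of_colon_of_sup {y : S} (rs : List S) : ∀ {K : Ideal S},
    IsRegularMod (K.colon {y}) rs → IsRegularMod (K ⊔ Ideal.span {y}) rs →
    IsRegularMod K rs ∧ Module.length S (S ⧸ (K ⊔ Ideal.ofList rs)) =
      Module.length S (S ⧸ (K.colon {y} ⊔ Ideal.ofList rs)) +
      Module.length S (S ⧸ (K ⊔ Ideal.span {y} ⊔ Ideal.ofList rs)) := by
  induction rs with
  | nil =>
    intro K _ _
    rw [Ideal.ofList_nil, sup_bot_eq, sup_bot_eq, sup_bot_eq]
    exact ⟨trivial, length_quotient_eq_colon_add_sup K y⟩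
  | cons s rs ih =>
    rintro K ⟨hc, hc'⟩ ⟨hs, hs'⟩
    have hmem : ∀ a, a * s ∈ K ⊔ Ideal.span {y} → ∃ k ∈ K, ∃ c, k + c * y = a := by
      intro a ha
      obtain ⟨k, hk, t, ht, rfl⟩ := Submodule.mem_sup.mp
        (hs (Submodule.mem_colon_singleton.mpr ha))
      obtain ⟨c, rfl⟩ := Ideal.mem_span_singleton'.mp ht
      exact ⟨k, hk, c, rfl⟩
    have hcolon : (K ⊔ Ideal.span {s}).colon {y} = K.colon {y} ⊔ Ideal.span {s} := by
      apply le_antisymm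
      · intro a ha
        rw [Submodule.mem_colon_singleton, smul_eq_mul] at ha
        obtain ⟨k, hk, t, ht, hkt⟩ := Submodule.mem_sup.mp ha
        obtain ⟨b, rfl⟩ := Ideal.mem_span_singleton'.mp ht
        obtain ⟨k', hk', c, hc⟩ := hmem b (by
          rw [← eq_sub_iff_add_eq'] at hkt
          rw [hkt]
          exact sub_mem (Ideal.mem_sup_right (Ideal.mem_span_singleton'.mpr ⟨a, rfl⟩))
            (Ideal.mem_sup_left hk))
        rw [← sub_add_cancel a (c * s)]
        refine add_mem (Ideal.mem_sup_left ?_)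
          (Ideal.mem_sup_right (Ideal.mem_span_singleton'.mpr ⟨c, rfl⟩))
        rw [Submodule.mem_colon_singleton, smul_eq_mul]
        have : (a - c * s) * y = k + k' * s := by
          linear_combination -hkt - s * hc
        rw [this]
        exact add_mem hk (Ideal.mul_mem_right _ _ hk')
      · refine sup_le (Submodule.colon_mono le_sup_left le_rfl) ?_
        rw [Ideal.span_singleton_le_iff_mem, Submodule.mem_colon_singleton, smul_eq_mul]
        exact Ideal.mem_sup_right (Ideal.mul_mem_right _ _ (Ideal.mem_span_singleton_self s))
    have hcomm : K ⊔ Ideal.span {y} ⊔ Ideal.span {s} = K ⊔ Ideal.span {s} ⊔ Ideal.span {y} :=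
      sup_right_comm _ _ _
    obtain ⟨h1, h2⟩ := ih (K := K ⊔ Ideal.span {s}) (hcolon ▸ hc') (hcomm ▸ hs')
    refine ⟨⟨fun a ha => ?_, h1⟩, ?_⟩
    · rw [Submodule.mem_colon_singleton, smul_eq_mul] at ha
      obtain ⟨k, hk, c, rfl⟩ := hmem a (Ideal.mem_sup_left ha)
      refine add_mem hk ?_
      have hcs : c ∈ (K.colon {y}).colon {s} := by
        simp only [Submodule.mem_colon_singleton, smul_eq_mul]
        rw [add_mul, add_mem_cancel_left (Ideal.mul_mem_right _ _ hk)] at ha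
        rwa [mul_right_comm]
      simpa [Submodule.mem_colon_singleton] using hc hcs
    · rw [Ideal.ofList_cons, ← sup_assoc, ← sup_assoc, ← sup_assoc, h2, hcolon, hcomm]

lemma mem_of_mul_pow_mem {K : Ideal S} {r : S} (hr : K.colon {r} ≤ K) (n : ℕ) {a : S}
    (ha : a * r ^ n ∈ K) : a ∈ K := by
  induction n with
  | zero => simpa using ha
  | succ n ih =>
    refine ih (hr ?_)
    rwa [Submodule.mem_colon_singleton, smul_eq_mul, mul_assoc, ← pow_succ]

lemma IsRegularMod.sup_span_pow {K : Ideal S} {r : S} {rs : List S}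
    (h : IsRegularMod K (r :: rs)) (n : ℕ) :
    IsRegularMod (K ⊔ Ideal.span {r ^ n}) rs ∧
      Module.length S (S ⧸ (K ⊔ Ideal.span {r ^ n} ⊔ Ideal.ofList rs)) =
        n * Module.length S (S ⧸ (K ⊔ Ideal.ofList (r :: rs))) := by
  rw [Ideal.ofList_cons, ← sup_assoc]
  induction n with
  | zero =>
    have : Ideal.span {r ^ 0} = (⊤ : Ideal S) := by rw [pow_zero, Ideal.span_singleton_one]
    rw [this, sup_top_eq, top_sup_eq, length_quotient_eq_zero_iff.mpr rfl, Nat.cast_zero, zero_mul]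
    exact ⟨isRegularMod_top rs, rfl⟩
  | succ n ih =>
    have hsup : K ⊔ Ideal.span {r ^ (n + 1)} ⊔ Ideal.span {r ^ n} = K ⊔ Ideal.span {r ^ n} := by
      rw [sup_assoc, sup_eq_right.mpr (Ideal.span_singleton_le_span_singleton.mpr
        (pow_dvd_pow r n.le_succ))]
    have hcolon : (K ⊔ Ideal.span {r ^ (n + 1)}).colon {r ^ n} = K ⊔ Ideal.span {r} := by
      apply le_antisymm
      · intro a ha
        rw [Submodule.mem_colon_singleton, smul_eq_mul] at ha
        obtain ⟨k, hk, t, ht, hkt⟩ := Submodule.mem_sup.mp ha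
        obtain ⟨b, rfl⟩ := Ideal.mem_span_singleton'.mp ht
        rw [← sub_add_cancel a (b * r)]
        refine add_mem (Ideal.mem_sup_left (mem_of_mul_pow_mem h.1 n ?_))
          (Ideal.mem_sup_right (Ideal.mem_span_singleton'.mpr ⟨b, rfl⟩))
        have : (a - b * r) * r ^ n = k := by linear_combination -hkt
        rwa [this]
      · refine sup_le (le_sup_left.trans Ideal.le_colon) ?_
        rw [Ideal.span_singleton_le_iff_mem, Submodule.mem_colon_singleton, smul_eq_mul,
          ← pow_succ']
        exact Ideal.mem_sup_right (Ideal.mem_span_singleton_self _)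
    obtain ⟨h1, h2⟩ := IsRegularMod.of_colon_of_sup (y := r ^ n) rs
      (K := K ⊔ Ideal.span {r ^ (n + 1)}) (hcolon ▸ h.2) (hsup ▸ ih.1)
    refine ⟨h1, ?_⟩
    rw [h2, hcolon, hsup, ih.2, Nat.cast_succ, add_mul, one_mul, add_comm]

lemma IsRegularMod.length_quotient_sup_ofList_pow (n : ℕ) (rs : List S) : ∀ {K : Ideal S},
    IsRegularMod K rs →
    Module.length S (S ⧸ (K ⊔ Ideal.ofList (rs.map (· ^ n)))) =
      n ^ rs.length * Module.length S (S ⧸ (K ⊔ Ideal.ofList rs)) := by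
  induction rs with
  | nil => intro K _; rw [List.map_nil, List.length_nil, pow_zero, one_mul]
  | cons r rs ih =>
    intro K h
    obtain ⟨h1, h2⟩ := h.sup_span_pow n
    rw [List.map_cons, Ideal.ofList_cons, ← sup_assoc, ih h1, h2, List.length_cons, pow_succ,
      mul_assoc]

end Length

lemma isRegularMod_of_natCast_length_le_ringKrullDim_quotient {S : Type*} [CommRing S]
    [IsNoetherianRing S] [IsLocalRing S] (rs : List S) : ∀ {K : Ideal S},
    K ⊔ Ideal.ofList rs = maximalIdeal S →
    (rs.length : WithBot ℕ∞) ≤ ringKrullDim (S ⧸ K) → IsRegularMod K rs := by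
  induction rs with
  | nil => intros; trivial
  | cons r rs ih =>
    intro K hK hdim
    refine ⟨fun a ha => ?_, ih (by rwa [Ideal.ofList_cons, ← sup_assoc] at hK)
      (natCast_length_le_ringKrullDim_quotient_sup_span hK hdim)⟩
    have hP := isPrime_of_natCast_length_le_ringKrullDim_quotient _ hK hdim
    exact (hP.mem_or_mem (Submodule.mem_colon_singleton.mp ha)).resolve_right
      (notMem_of_natCast_length_le_ringKrullDim_quotient hK hdim)

section FrobeniusPower

variable {S : Type*} [CommRing S] (p : ℕ) [ExpChar S p]

lemma frobeniusPower_eq_map (I : Ideal S) : frobeniusPower p I = I.map (frobenius S p) := rfl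

lemma frobeniusPower_mono {I J : Ideal S} (h : I ≤ J) : frobeniusPower p I ≤ frobeniusPower p J :=
  Ideal.map_mono (f := frobenius S p) h

lemma frobeniusPower_sup (I J : Ideal S) :
    frobeniusPower p (I ⊔ J) = frobeniusPower p I ⊔ frobeniusPower p J :=
  Ideal.map_sup (frobenius S p) I J

lemma frobeniusPower_span_singleton (y : S) :
    frobeniusPower p (Ideal.span {y}) = Ideal.span {y ^ p} := by
  rw [frobeniusPower_eq_map, Ideal.map_span, Set.image_singleton, frobenius_def]

lemma frobeniusPower_ofList (rs : List S) :
    frobeniusPower p (Ideal.ofList rs) = Ideal.ofList (rs.map (· ^ p)) :=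
  Ideal.map_ofList (frobenius S p) rs

lemma frobeniusPower_le (I : Ideal S) : frobeniusPower p I ≤ I := by
  rw [frobeniusPower, Ideal.span_le]
  rintro _ ⟨a, ha, rfl⟩
  exact Ideal.pow_mem_of_mem I ha p (expChar_pos S p)

lemma frobeniusPower_colon_le (J : Ideal S) (y : S) :
    frobeniusPower p (J.colon {y}) ≤ (frobeniusPower p J).colon {y ^ p} := by
  rw [frobeniusPower_eq_map, frobeniusPower_eq_map, Ideal.map_le_iff_le_comap]
  intro a ha
  rw [Ideal.mem_comap, Submodule.mem_colon_singleton, smul_eq_mul, ← frobenius_def, ← map_mul]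
  exact Ideal.mem_map_of_mem _ (Submodule.mem_colon_singleton.mp ha)

lemma length_quotient_frobeniusPower_eq_colon_add_sup (J : Ideal S) (y : S) :
    Module.length S (S ⧸ frobeniusPower p J) =
      Module.length S (S ⧸ (frobeniusPower p J).colon {y ^ p}) +
      Module.length S (S ⧸ frobeniusPower p (J ⊔ Ideal.span {y})) := by
  have h : frobeniusPower p (J ⊔ Ideal.span {y}) = frobeniusPower p J ⊔ Ideal.span {y ^ p} :=
    (frobeniusPower_sup p J _).trans (congrArg _ (frobeniusPower_span_singleton p y))
  exact h ▸ length_quotient_eq_colon_add_sup (frobeniusPower p J) (y ^ p)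

variable [IsLocalRing S]

lemma length_quotient_maximalIdeal : Module.length S (S ⧸ maximalIdeal S) = 1 := by
  rw [Module.length_eq_one_iff, isSimpleModule_iff_isCoatom]
  exact (maximalIdeal.isMaximal S).out

lemma length_quotient_frobeniusPower_le {J : Ideal S} (hJ : Module.length S (S ⧸ J) ≠ ⊤) :
    Module.length S (S ⧸ frobeniusPower p J) ≤
      Module.length S (S ⧸ frobeniusPower p (maximalIdeal S)) * Module.length S (S ⧸ J) := by
  induction h : Module.length S (S ⧸ J) using WellFoundedLT.induction generalizing J with
  | ind l ih =>
    subst h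
    by_cases htop : J = ⊤
    · subst htop
      have : frobeniusPower p (⊤ : Ideal S) = ⊤ := Ideal.map_top (frobenius S p)
      rw [this, length_quotient_eq_zero_iff.mpr rfl]
      exact zero_le
    by_cases hmax : maximalIdeal S ≤ J
    · obtain rfl := le_antisymm (le_maximalIdeal htop) hmax
      rw [length_quotient_maximalIdeal, mul_one]
    obtain ⟨y, hym, hyJ⟩ := SetLike.not_le_iff_exists.mp hmax
    have hlen := length_quotient_eq_colon_add_sup J y
    have hsup : Module.length S (S ⧸ (J ⊔ Ideal.span {y})) < Module.length S (S ⧸ J) :=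
      length_quotient_sup_span_lt hJ hyJ
    have hcolon : Module.length S (S ⧸ J.colon {y}) < Module.length S (S ⧸ J) := by
      refine lt_of_le_of_ne (hlen ▸ le_self_add) fun heq => ?_
      rw [heq] at hlen
      have h0 := ENat.add_right_injective_of_ne_top hJ
        (show _ + Module.length S (S ⧸ (J ⊔ Ideal.span {y})) = _ + 0 by rw [← hlen, add_zero])
      rw [length_quotient_eq_zero_iff] at h0
      refine Ideal.IsPrime.ne_top' (I := maximalIdeal S) (top_le_iff.mp (h0 ▸ ?_))
      exact sup_le (le_maximalIdeal htop) ((Ideal.span_singleton_le_iff_mem _).mpr hym)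
    rw [length_quotient_frobeniusPower_eq_colon_add_sup p J y, hlen, mul_add]
    refine add_le_add ?_ (ih _ hsup hsup.ne_top rfl)
    exact (length_quotient_anti (frobeniusPower_colon_le p J y)).trans
      (ih _ hcolon hcolon.ne_top rfl)

/-- If the Frobenius power multiplies the colength of `J` by the colength of `𝔫^[p]`, then the
Frobenius power commutes with the colon of `J` by an element `y`, and `J + (y)` has the same
property. -/
lemma length_quotient_frobeniusPower_sup_eq_and_colon_eq {J : Ideal S}
    (hq : Module.length S (S ⧸ frobeniusPower p (maximalIdeal S)) ≠ ⊤)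
    (hJ : Module.length S (S ⧸ J) ≠ ⊤)
    (h : Module.length S (S ⧸ frobeniusPower p J) =
      Module.length S (S ⧸ frobeniusPower p (maximalIdeal S)) * Module.length S (S ⧸ J))
    (y : S) :
    Module.length S (S ⧸ frobeniusPower p (J ⊔ Ideal.span {y})) =
      Module.length S (S ⧸ frobeniusPower p (maximalIdeal S)) *
        Module.length S (S ⧸ (J ⊔ Ideal.span {y})) ∧
    frobeniusPower p (J.colon {y}) = (frobeniusPower p J).colon {y ^ p} := by
  have hlen := length_quotient_eq_colon_add_sup J y
  have hcfin : Module.length S (S ⧸ J.colon {y}) ≠ ⊤ :=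
    ne_top_of_le_ne_top hJ (hlen ▸ le_self_add)
  have hsfin : Module.length S (S ⧸ (J ⊔ Ideal.span {y})) ≠ ⊤ :=
    ne_top_of_le_ne_top hJ (length_quotient_anti le_sup_left)
  have hF := length_quotient_frobeniusPower_eq_colon_add_sup p J y
  have hc1 := length_quotient_anti (frobeniusPower_colon_le p J y)
  have hc2 := length_quotient_frobeniusPower_le p hcfin
  have hs := length_quotient_frobeniusPower_le p hsfin
  rw [h, hlen, mul_add] at hF
  have hc2fin := ne_top_of_le_ne_top (WithTop.mul_ne_top hq hcfin) hc2
  suffices hkey : ∀ q b c u u' w : ℕ∞, q ≠ ⊤ → b ≠ ⊤ → c ≠ ⊤ → u ≤ u' → u' ≤ q * b → w ≤ q * c →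
      q * b + q * c = u + w → w = q * c ∧ u' ≤ u by
    obtain ⟨h1, h2⟩ := hkey _ _ _ _ _ _ hq hcfin hsfin hc1 hc2 hs hF
    exact ⟨h1, eq_of_le_of_length_quotient_le (frobeniusPower_colon_le p J y) hc2fin h2⟩
  intro q b c u u' w hq hb hc hu hu' hw heq
  have hbfin : q * b ≠ ⊤ := WithTop.mul_ne_top hq hb
  have hcfin : q * c ≠ ⊤ := WithTop.mul_ne_top hq hc
  generalize q * b = qb at *
  generalize q * c = qc at *
  lift qb to ℕ using hbfin
  lift qc to ℕ using hcfin
  lift u' to ℕ using ne_top_of_le_ne_top (ENat.natCast_ne_top _) hu'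
  lift u to ℕ using ne_top_of_le_ne_top (ENat.natCast_ne_top _) hu
  lift w to ℕ using ne_top_of_le_ne_top (ENat.natCast_ne_top _) hw
  norm_cast at *
  omega

lemma frobeniusPower_colon_of_le [IsNoetherianRing S] {J₀ J : Ideal S} (hle : J₀ ≤ J)
    (hq : Module.length S (S ⧸ frobeniusPower p (maximalIdeal S)) ≠ ⊤)
    (hJ₀ : Module.length S (S ⧸ J₀) ≠ ⊤)
    (h : Module.length S (S ⧸ frobeniusPower p J₀) =
      Module.length S (S ⧸ frobeniusPower p (maximalIdeal S)) * Module.length S (S ⧸ J₀))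
    (y : S) : frobeniusPower p (J.colon {y}) = (frobeniusPower p J).colon {y ^ p} := by
  have key : ∀ rs : List S, Module.length S (S ⧸ frobeniusPower p (J₀ ⊔ Ideal.ofList rs)) =
      Module.length S (S ⧸ frobeniusPower p (maximalIdeal S)) *
        Module.length S (S ⧸ (J₀ ⊔ Ideal.ofList rs)) := by
    intro rs
    induction rs with
    | nil => rwa [Ideal.ofList_nil, sup_bot_eq]
    | cons r rs ih =>
      rw [Ideal.ofList_cons, sup_comm (Ideal.span {r}), ← sup_assoc]
      exact (length_quotient_frobeniusPower_sup_eq_and_colon_eq p hq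
        (ne_top_of_le_ne_top hJ₀ (length_quotient_anti le_sup_left)) ih r).1
  obtain ⟨s, hs⟩ := IsNoetherian.noetherian J
  have hsJ : J₀ ⊔ Ideal.ofList s.toList = J := by
    rw [Ideal.ofList, show {r | r ∈ s.toList} = (s : Set S) by ext; simp, Ideal.span, hs]
    exact sup_eq_right.mpr hle
  have hJ := key s.toList
  rw [hsJ] at hJ
  exact (length_quotient_frobeniusPower_sup_eq_and_colon_eq p hq
    (ne_top_of_le_ne_top hJ₀ (length_quotient_anti hle)) hJ y).2

end FrobeniusPower

/-- A consequence of the Artin–Rees lemma. -/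
lemma exists_colon_sup_pow_le {S : Type*} [CommRing S] [IsNoetherianRing S] (I m : Ideal S)
    (x : S) : ∃ c, ∀ n ≥ c, (I ⊔ m ^ n).colon {x} ≤ I.colon {x} ⊔ m ^ (n - c) := by
  obtain ⟨c, hc⟩ := m.exists_pow_inf_eq_pow_smul (I ⊔ Ideal.span {x})
  refine ⟨c, fun n hn b hb => ?_⟩
  rw [Submodule.mem_colon_singleton, smul_eq_mul] at hb
  obtain ⟨i, hi, t, ht, hit⟩ := Submodule.mem_sup.mp hb
  have ht' : t ∈ m ^ n • (⊤ : Ideal S) ⊓ (I ⊔ Ideal.span {x}) := by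
    refine ⟨by simpa using ht, ?_⟩
    rw [← eq_sub_iff_add_eq'] at hit
    rw [hit]
    exact sub_mem (Ideal.mem_sup_right (Ideal.mem_span_singleton'.mpr ⟨b, rfl⟩))
      (Ideal.mem_sup_left hi)
  rw [hc n hn] at ht'
  have ht'' : t ∈ I ⊔ m ^ (n - c) * Ideal.span {x} := by
    refine (?_ : _ ≤ I ⊔ m ^ (n - c) * Ideal.span {x}) ht'
    refine (smul_mono_right (m ^ (n - c)) inf_le_right).trans ?_
    rw [smul_eq_mul, Ideal.mul_sup]
    exact sup_le_sup_right Ideal.mul_le_right _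
  obtain ⟨i', hi', v, hv, rfl⟩ := Submodule.mem_sup.mp ht''
  obtain ⟨u, hu, rfl⟩ := Ideal.mem_mul_span_singleton.mp hv
  rw [← sub_add_cancel b u]
  refine add_mem (Ideal.mem_sup_left ?_) (Ideal.mem_sup_right hu)
  rw [Submodule.mem_colon_singleton, smul_eq_mul]
  have : (b - u) * x = i + i' := by linear_combination -hit
  rw [this]
  exact add_mem hi hi'

lemma mem_of_forall_mem_sup_pow_maximalIdeal {S : Type*} [CommRing S] [IsNoetherianRing S]
    [IsLocalRing S] {I : Ideal S} {a : S} (h : ∀ n, a ∈ I ⊔ maximalIdeal S ^ n) : a ∈ I := by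
  have hbot := Ideal.iInf_pow_smul_eq_bot_of_isLocalRing (M := S ⧸ I) (maximalIdeal S)
    Ideal.IsPrime.ne_top'
  rw [← Submodule.Quotient.mk_eq_zero, ← Submodule.mem_bot S, ← hbot, Submodule.mem_iInf]
  intro n
  obtain ⟨i, hi, t, ht, rfl⟩ := Submodule.mem_sup.mp (h n)
  have : (Submodule.Quotient.mk (i + t) : S ⧸ I) = t • Submodule.Quotient.mk 1 := by
    rw [← Submodule.Quotient.mk_smul, Submodule.Quotient.eq]
    simpa using hi
  rw [this]
  exact Submodule.smul_mem_smul ht trivial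

/-- In a regular local ring of characteristic `p`, the Frobenius power commutes with the colon
ideal by an element. -/
lemma frobeniusPower_colon_eq {S : Type*} [CommRing S] [IsNoetherianRing S] [IsLocalRing S]
    (hreg : IsRegularLocal S) (p : ℕ) [ExpChar S p] (I : Ideal S) (x : S) :
    frobeniusPower p (I.colon {x}) = (frobeniusPower p I).colon {x ^ p} := by
  refine le_antisymm (frobeniusPower_colon_le p I x) fun a ha => ?_
  obtain ⟨d, f, hf, hdim⟩ := hreg
  set rs := List.ofFn f
  have hrs : Ideal.ofList rs = maximalIdeal S := by
    rw [← hf, Ideal.ofList]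
    congr 1
    ext
    simp [rs]
  have hR : IsRegularMod (⊥ : Ideal S) rs := by
    refine isRegularMod_of_natCast_length_le_ringKrullDim_quotient rs (by rwa [bot_sup_eq]) ?_
    rw [ringKrullDim_eq_of_ringEquiv (RingEquiv.quotientBot S), ← hdim, List.length_ofFn]
    rfl
  have hlen (n : ℕ) : Module.length S (S ⧸ Ideal.ofList (rs.map (· ^ n))) =
      (n ^ rs.length : ℕ) := by
    have := hR.length_quotient_sup_ofList_pow n
    rw [bot_sup_eq, bot_sup_eq, hrs, length_quotient_maximalIdeal, mul_one] at this
    exact_mod_cast this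
  have hmap (n : ℕ) : frobeniusPower p (Ideal.ofList (rs.map (· ^ n))) =
      Ideal.ofList (rs.map (· ^ (n * p))) := by
    rw [frobeniusPower_ofList, List.map_map]
    congr 2
    ext
    simp [pow_mul]
  have hq : Module.length S (S ⧸ frobeniusPower p (maximalIdeal S)) = (p ^ rs.length : ℕ) := by
    rw [← hrs, frobeniusPower_ofList, hlen]
  obtain ⟨c, hc⟩ := exists_colon_sup_pow_le I (maximalIdeal S) x
  refine mem_of_forall_mem_sup_pow_maximalIdeal fun k => ?_
  have hpow : Ideal.ofList (rs.map (· ^ (k + c))) ≤ maximalIdeal S ^ (k + c) := by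
    rw [Ideal.ofList, Ideal.span_le]
    intro b hb
    obtain ⟨r, hr, rfl⟩ := List.mem_map.mp hb
    exact Ideal.pow_mem_pow (hrs ▸ Ideal.subset_span hr) _
  have hcolon := frobeniusPower_colon_of_le p
    (J₀ := Ideal.ofList (rs.map (· ^ (k + c)))) (J := I ⊔ Ideal.ofList (rs.map (· ^ (k + c))))
    le_sup_right (by rw [hq]; exact ENat.natCast_ne_top _) (by rw [hlen]; exact ENat.natCast_ne_top _)
    (by rw [hmap, hlen, hlen, hq, mul_pow, mul_comm, Nat.cast_mul]) x
  have ha' := Submodule.colon_mono (frobeniusPower_mono p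
    (le_sup_left : I ≤ I ⊔ Ideal.ofList (rs.map (· ^ (k + c))))) le_rfl ha
  rw [← hcolon] at ha'
  have hle := (Submodule.colon_mono (sup_le_sup_left hpow I) le_rfl).trans
    (hc (k + c) (Nat.le_add_left c k))
  have hak := frobeniusPower_mono p hle ha'
  rw [Nat.add_sub_cancel, frobeniusPower_sup] at hak
  have hfin : frobeniusPower p (I.colon {x}) ⊔ frobeniusPower p (maximalIdeal S ^ k) ≤
      frobeniusPower p (I.colon {x}) ⊔ maximalIdeal S ^ k :=
    sup_le_sup_left (frobeniusPower_le p _) _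
  exact hfin hak

/-- Let `(S,𝔫)` be a regular local ring of prime characteristic `p > 0`,
`I` an ideal of `S`, and `x ∈ S` an element whose image in `S/I` is a non-zerodivisor.
Then the image of `x` in `S/I^[p]` is a non-zerodivisor. -/
theorem nonZeroDivisor_mod_frobeniusPower
    (p : ℕ) (hp : p.Prime)
    (S : Type*) [CommRing S] [IsNoetherianRing S] [IsLocalRing S] [CharP S p]
    (hreg : IsRegularLocal S)
    (I : Ideal S) (x : S)
    (hx : Ideal.Quotient.mk I x ∈ nonZeroDivisors (S ⧸ I)) :
    Ideal.Quotient.mk (frobeniusPower p I) x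
      ∈ nonZeroDivisors (S ⧸ frobeniusPower p I) := by
  have : ExpChar S p := ExpChar.prime hp
  have hcolon : I.colon {x} = I := by
    refine le_antisymm (fun a ha => ?_) Ideal.le_colon
    rw [Submodule.mem_colon_singleton, smul_eq_mul] at ha
    rw [← Ideal.Quotient.eq_zero_iff_mem] at ha ⊢
    rw [map_mul] at ha
    exact (mul_right_mem_nonZeroDivisors_eq_zero_iff hx).mp ha
  rw [mem_nonZeroDivisors_iff_right]
  intro a ha
  obtain ⟨a, rfl⟩ := Ideal.Quotient.mk_surjective a
  rw [← map_mul, Ideal.Quotient.eq_zero_iff_mem] at ha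
  rw [Ideal.Quotient.eq_zero_iff_mem, ← hcolon, frobeniusPower_colon_eq hreg,
    Submodule.mem_colon_singleton, smul_eq_mul, ← Nat.succ_pred_eq_of_pos hp.pos, pow_succ',
    ← mul_assoc, Nat.succ_pred_eq_of_pos hp.pos]
  exact Ideal.mul_mem_right _ _ ha
end

section
/- Let (R,𝔪) be an F-finite Noetherian local ring of prime characteristic p > 0, let x ∈ 𝔪 be a non-zerodivisor on R, and let t ≥ 0 be a real number. If the pair (R, x^t) is sharply F-pure, then there exists an integer N ≥ 1 such that the pair (R, (x+δ)^t) is sharply F-pure for every δ ∈ 𝔪^N. -/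
open IsLocalRing

/-- A `p^{-e}`-linear map on `R`: an additive map `φ : R → R` with
`φ (r^{p^e} * s) = r * φ s` for all `r, s`. -/
def IsPeLinearMap (p e : ℕ) {R : Type*} [CommRing R] (φ : R → R) : Prop :=
  (∀ a b : R, φ (a + b) = φ a + φ b) ∧ ∀ r s : R, φ (r ^ p ^ e * s) = r * φ s

/-- `R` is F-finite: the Frobenius endomorphism `r ↦ r ^ p` is a finite ring map. -/
def IsFFinite (p : ℕ) (R : Type*) [CommRing R] : Prop :=
  ∃ f : R →+* R, (∀ r, f r = r ^ p) ∧ f.Finite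

/-- The pair `(R, x^t)` is sharply F-pure: for infinitely many `e ≥ 1` there is a
`p^{-e}`-linear map `φ : R → R` with `φ (x^{⌈t(p^e - 1)⌉} * r^{p^e}) = r` for all `r`. -/
def SharplyFPurePair (p : ℕ) {R : Type*} [CommRing R] (x : R) (t : ℝ) : Prop :=
  ∀ E : ℕ, ∃ e : ℕ, E ≤ e ∧ 1 ≤ e ∧ ∃ φ : R → R, IsPeLinearMap p e φ ∧
    ∀ r : R, φ (x ^ ⌈t * ((p : ℝ) ^ e - 1)⌉₊ * r ^ p ^ e) = r

namespace IsPeLinearMap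

variable {p e e' : ℕ} {R : Type*} [CommRing R] {φ ψ : R → R}

lemma comp (hφ : IsPeLinearMap p e φ) (hψ : IsPeLinearMap p e' ψ) :
    IsPeLinearMap p (e + e') (φ ∘ ψ) := by
  refine ⟨fun a b => by simp [hφ.1, hψ.1], fun r s => ?_⟩
  simp only [Function.comp_apply]
  rw [pow_add, pow_mul, hψ.2, hφ.2]

lemma const_mul (hφ : IsPeLinearMap p e φ) (c : R) : IsPeLinearMap p e (fun s => c * φ s) :=
  ⟨fun a b => by simp only [hφ.1, mul_add], fun r s => by simp only [hφ.2]; ring⟩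

lemma mul_left (hφ : IsPeLinearMap p e φ) (c : R) : IsPeLinearMap p e (fun s => φ (c * s)) :=
  ⟨fun a b => by simp only [mul_add, hφ.1], fun r s => by
    simp only [mul_left_comm c, hφ.2]⟩

/-- A `p^{-e}`-linear map sends the Frobenius power `I^{[p^e]}` into `I`. -/
lemma map_mem_of_mem_span_pow (hφ : IsPeLinearMap p e φ) (I : Ideal R) {a : R}
    (ha : a ∈ Ideal.span ((fun r => r ^ p ^ e) '' (I : Set R))) : φ a ∈ I := by
  suffices h : ∀ c, φ (c * a) ∈ I by simpa using h 1
  induction ha using Submodule.span_induction with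
  | mem a ha =>
    obtain ⟨r, hr, rfl⟩ := ha
    intro c
    rw [mul_comm, hφ.2]
    exact I.mul_mem_right _ hr
  | zero =>
    have h : φ 0 = 0 := by simpa using hφ.1 0 0
    simp [h]
  | add a b _ _ ha hb =>
    intro c
    rw [mul_add, hφ.1]
    exact I.add_mem (ha c) (hb c)
  | smul d a _ ha =>
    intro c
    simpa [mul_assoc] using ha (c * d)

end IsPeLinearMap

/-- Some `p^{-e}`-linear map sends a power `y ^ m` with `t * (p ^ e - 1) ≤ m` to `1`. -/
def SplitsAt (p : ℕ) {R : Type*} [CommRing R] (y : R) (t : ℝ) (e : ℕ) : Prop :=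
  ∃ (m : ℕ) (φ : R → R), t * ((p : ℝ) ^ e - 1) ≤ m ∧ IsPeLinearMap p e φ ∧ φ (y ^ m) = 1

namespace SplitsAt

variable {p e e' : ℕ} {R : Type*} [CommRing R] {y : R} {t : ℝ}

lemma add (h : SplitsAt p y t e) (h' : SplitsAt p y t e') : SplitsAt p y t (e + e') := by
  obtain ⟨m, φ, hm, hφ, h1⟩ := h
  obtain ⟨m', ψ, hm', hψ, h1'⟩ := h'
  refine ⟨m * p ^ e' + m', φ ∘ ψ, ?_, hφ.comp hψ, ?_⟩
  · have hpe : (0 : ℝ) ≤ (p : ℝ) ^ e' := by positivity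
    have := mul_le_mul_of_nonneg_right hm hpe
    push_cast
    rw [pow_add]
    linarith
  · rw [Function.comp_apply, pow_add, pow_mul, hψ.2, h1', mul_one, h1]

lemma mul_succ (h : SplitsAt p y t e) (k : ℕ) : SplitsAt p y t (e * (k + 1)) := by
  induction k with
  | zero => simpa using h
  | succ k ih => exact ih.add h

lemma exists_forall_eq (h : SplitsAt p y t e) :
    ∃ φ : R → R, IsPeLinearMap p e φ ∧
      ∀ r : R, φ (y ^ ⌈t * ((p : ℝ) ^ e - 1)⌉₊ * r ^ p ^ e) = r := by
  obtain ⟨m, φ, hm, hφ, h1⟩ := h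
  refine ⟨_, hφ.mul_left (y ^ (m - ⌈t * ((p : ℝ) ^ e - 1)⌉₊)), fun r => ?_⟩
  rw [← mul_assoc, ← pow_add, Nat.sub_add_cancel (Nat.ceil_le.2 hm), mul_comm, hφ.2, h1, mul_one]

/-- A single splitting suffices for sharp F-purity. -/
lemma sharplyFPurePair (h : SplitsAt p y t e) (he : 1 ≤ e) : SharplyFPurePair p y t := fun E =>
  ⟨e * (E + 1), by nlinarith, by nlinarith, (h.mul_succ E).exists_forall_eq⟩

end SplitsAt

/-- Let `(R,𝔪)` be an F-finite Noetherian local ring of prime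
characteristic `p > 0`, `x ∈ 𝔪` a non-zerodivisor, and `t ≥ 0` a real number.  If the pair
`(R, x^t)` is sharply F-pure, then there is an `N ≥ 1` such that `(R, (x+δ)^t)` is sharply
F-pure for every `δ ∈ 𝔪 ^ N`. -/
theorem sharplyFPure_is_stable
    (p : ℕ) (hp : p.Prime)
    (R : Type*) [CommRing R] [IsNoetherianRing R] [IsLocalRing R] [CharP R p]
    (hff : IsFFinite p R)
    (x : R) (hx : x ∈ maximalIdeal R) (hreg : x ∈ nonZeroDivisors R)
    (t : ℝ) (ht : 0 ≤ t)
    (hsharp : SharplyFPurePair p x t) :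
    ∃ N : ℕ, 1 ≤ N ∧ ∀ δ ∈ maximalIdeal R ^ N, SharplyFPurePair p (x + δ) t := by
  obtain ⟨e, -, he, φ, hφ, hφx⟩ := hsharp 0
  set n := ⌈t * ((p : ℝ) ^ e - 1)⌉₊
  let J : Ideal R := Ideal.span ((fun r => r ^ p ^ e) '' (maximalIdeal R : Set R))
  have hφx1 : φ (x ^ n) = 1 := by simpa using hφx 1
  have hrad : maximalIdeal R ≤ J.radical := fun r hr =>
    ⟨p ^ e, Ideal.subset_span ⟨r, hr, rfl⟩⟩
  obtain ⟨N, hN⟩ := Ideal.exists_pow_le_of_le_radical_of_fg hrad (IsNoetherian.noetherian _)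
  refine ⟨N + 1, by omega, fun δ hδ => ?_⟩
  have hδJ : δ ∈ J := hN (Ideal.pow_le_pow_right (Nat.le_succ N) hδ)
  have hdiff : (x + δ) ^ n - x ^ n ∈ J :=
    J.mem_of_dvd (sub_dvd_pow_sub_pow (x + δ) x n) (by simpa using hδJ)
  have hmem := hφ.map_mem_of_mem_span_pow _ hdiff
  have heq : φ ((x + δ) ^ n) = 1 + φ ((x + δ) ^ n - x ^ n) := by
    rw [← hφx1, ← hφ.1, add_sub_cancel]
  have hunit : IsUnit (φ ((x + δ) ^ n)) := by
    by_contra h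
    have h1 := (maximalIdeal R).sub_mem ((mem_maximalIdeal _).2 h) hmem
    rw [heq, add_sub_cancel_right] at h1
    exact (mem_maximalIdeal _).1 h1 isUnit_one
  obtain ⟨c, hc⟩ := hunit.exists_left_inv
  exact SplitsAt.sharplyFPurePair
    ⟨n, _, Nat.le_ceil _, hφ.const_mul c, hc⟩ he
end
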